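/- Let M be a Coxeter matrix on a countable type S with M s t = 0 or M s t ≥ 4 for all s ≠ t (extra-large type, 0 encoding ∞), let A be the associated Artin group with generators a : S → A, and let w = (a_{i_1}^{ε_1}, …, a_{i_k}^{ε_k}) be a word in the generators and their inverses (ε_j ∈ {+1, −1}) whose associated partition of {1, …, k} is a pair partition. (i) If there exist j ≠ l with i_j = i_l and ε_j = ε_l, then a_{i_1}^{ε_1} · … · a_{i_k}^{ε_k} ≠ 1 in A. (ii) Conversely, if the pair partition is non-crossing and ε_j = −ε_l whenever j ≠ l and i_j = i_l, then a_{i_1}^{ε_1} · … · a_{i_k}^{ε_k} = 1 in A. -/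

import Mathlib

open Filter Topology

/-- The alternating word `s·t·s·t·⋯` with `m` factors (starting with `s`), as an element of the
free group on `S`. -/
def artinAltWord {S : Type*} (s t : S) (m : ℕ) : FreeGroup S :=
  (List.ofFn fun j : Fin m => FreeGroup.of (if (j : ℕ) % 2 = 0 then s else t)).prod

/-- The Artin relators associated to a Coxeter matrix `M` : for each pair `s ≠ t` with
`2 ≤ M s t` (finite), the relator `alt(s, t, M s t) · alt(t, s, M s t)⁻¹` expressing
`s·t·s·⋯ = t·s·t·⋯` (both sides with `M s t` factors). -/
def artinRelators {S : Type*} (M : CoxeterMatrix S) : Set (FreeGroup S) :=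
  {x | ∃ s t : S, s ≠ t ∧ 2 ≤ M s t ∧
    x = artinAltWord s t (M s t) * (artinAltWord t s (M s t))⁻¹}

/-- The Artin group associated to a Coxeter matrix `M`. -/
abbrev ArtinGroup {S : Type*} (M : CoxeterMatrix S) : Type _ :=
  PresentedGroup (artinRelators M)

/-- The generators of the Artin group associated to `M`. -/
def artinGen {S : Type*} (M : CoxeterMatrix S) (s : S) : ArtinGroup M :=
  PresentedGroup.of s

/-!
Sending the generator `s` to the permutation `(t, n) ↦ (s t s⁻¹, n + [t = s])` of `W × ℤ`, where `W`
is the Coxeter group, defines an action of the Artin group, because the two sides of a braid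
relation meet the same reflections in opposite orders. Hence a word with value `1` meets every
reflection with total exponent `0`.

In extra-large type, if each letter occurs at most twice, then distinct letters meet distinct
reflections, so the total exponent of every letter vanishes. Otherwise `s_i u = u s_j` in `W` for
some `i ≠ j` and some word `u` containing `j` at most once, and then `s_i` negates `u α_j` in the
geometric representation, so that `α_j` has coefficient `0` in `u α_j`. If `j` does not occur in `u`
this coefficient is `1`, and if `v` is the part of `u` after the letter `j` it is
`1 - ⟨α_j^∨, v α_j⟩`. The pairing here is `2` or at most `0`, because `⟨α_s^∨, α_t⟩ ≤ -√2` for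
`s ≠ t`.

Conversely, the part of a noncrossing word between the first two occurrences of its first letter
shares no letter with the rest, so it has value `1` when all total exponents vanish, and the two
powers of the first letter can be merged.
-/

/-- The value of a word in letters with integer exponents when each letter `s` is sent to `f s`. -/
def zpowProd {S G : Type*} [Group G] (f : S → G) (L : List (S × ℤ)) : G :=
  (L.map fun p => f p.1 ^ p.2).prod

section ZPowProd

variable {S G H : Type*} [Group G] [Group H] (f : S → G)

@[simp]
theorem zpowProd_nil : zpowProd f [] = 1 := rfl

@[simp]
theorem zpowProd_cons (p : S × ℤ) (L : List (S × ℤ)) :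
    zpowProd f (p :: L) = f p.1 ^ p.2 * zpowProd f L := by
  simp [zpowProd]

@[simp]
theorem zpowProd_append (L L' : List (S × ℤ)) :
    zpowProd f (L ++ L') = zpowProd f L * zpowProd f L' := by
  simp [zpowProd]

theorem zpowProd_map_prodMk_one (ω : List S) :
    zpowProd f (ω.map (·, 1)) = (ω.map f).prod := by
  simp [zpowProd, Function.comp_def]

theorem zpowProd_ofFn {k : ℕ} (i : Fin k → S) (ε : Fin k → ℤ) :
    zpowProd f (List.ofFn fun j => (i j, ε j)) = (List.ofFn fun j => f (i j) ^ ε j).prod := by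
  simp [zpowProd, List.map_ofFn, Function.comp_def]

theorem map_zpowProd (φ : G →* H) (L : List (S × ℤ)) :
    φ (zpowProd f L) = zpowProd (φ ∘ f) L := by
  simp [zpowProd, map_list_prod, Function.comp_def]

end ZPowProd

/-- The abelianization of a word in signed letters: the total exponent of each letter. -/
noncomputable def exponentSum {α : Type*} (L : List (α × ℤ)) : α →₀ ℤ :=
  (L.map fun p => Finsupp.single p.1 p.2).sum

section ExponentSum

variable {α β : Type*}

@[simp]
theorem exponentSum_nil : exponentSum ([] : List (α × ℤ)) = 0 := rfl

@[simp]
theorem exponentSum_cons (p : α × ℤ) (L : List (α × ℤ)) :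
    exponentSum (p :: L) = Finsupp.single p.1 p.2 + exponentSum L := by
  simp [exponentSum]

@[simp]
theorem exponentSum_append (L L' : List (α × ℤ)) :
    exponentSum (L ++ L') = exponentSum L + exponentSum L' := by
  simp [exponentSum]

theorem exponentSum_map (g : α → β) (L : List (α × ℤ)) :
    exponentSum (L.map (Prod.map g id)) = (exponentSum L).mapDomain g := by
  induction L with
  | nil => simp
  | cons p L ih => simp [ih, Finsupp.mapDomain_add, Finsupp.mapDomain_single]

theorem exponentSum_map_prodMk_one (l : List α) :
    exponentSum (l.map (·, 1)) = (l.map (Finsupp.single · 1)).sum := by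
  simp [exponentSum, Function.comp_def]

theorem exponentSum_ofFn {k : ℕ} (i : Fin k → α) (ε : Fin k → ℤ) :
    exponentSum (List.ofFn fun j => (i j, ε j)) = ∑ j, Finsupp.single (i j) (ε j) := by
  simp [exponentSum, List.map_ofFn, List.sum_ofFn]

theorem exponentSum_apply_of_notMem {L : List (α × ℤ)} {x : α} (hx : x ∉ L.map Prod.fst) :
    exponentSum L x = 0 := by
  induction L with
  | nil => simp
  | cons p L ih =>
    obtain ⟨hxp, hxL⟩ : x ≠ p.1 ∧ x ∉ L.map Prod.fst := by simpa using hx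
    simp [ih hxL, hxp]

theorem exponentSum_eq_zero_of_add_eq_zero {L L' : List (α × ℤ)}
    (hdisj : (L.map Prod.fst).Disjoint (L'.map Prod.fst))
    (hsum : exponentSum L + exponentSum L' = 0) : exponentSum L = 0 := by
  ext x
  by_cases hx : x ∈ L.map Prod.fst
  · simpa [exponentSum_apply_of_notMem (hdisj hx)] using DFunLike.congr_fun hsum x
  · exact exponentSum_apply_of_notMem hx

end ExponentSum

section Noncrossing

open scoped List

theorem exists_eq_append_cons_of_mem_map_fst {α β : Type*} {L : List (α × β)} {a : α}
    (ha : a ∈ L.map Prod.fst) :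
    ∃ P b Q, L = P ++ (a, b) :: Q ∧ a ∉ P.map Prod.fst := by
  obtain ⟨_, _, hL, haP⟩ := List.eq_append_cons_of_mem ha
  obtain ⟨P, _, rfl, rfl, hQ⟩ := List.map_eq_append_iff.1 hL
  obtain ⟨⟨_, b⟩, Q, rfl, rfl, rfl⟩ := List.map_eq_cons_iff.1 hQ
  exact ⟨P, b, Q, rfl, haP⟩

theorem zpowProd_eq_one_of_noncrossing {S G : Type*} [Group G] (f : S → G) (L : List (S × ℤ))
    (hnc : ∀ x y, x ≠ y → ¬ [x, y, x, y] <+ L.map Prod.fst) (hsum : exponentSum L = 0) :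
    zpowProd f L = 1 := by
  match L with
  | [] => rfl
  | (a, e) :: L =>
    by_cases ha : a ∈ L.map Prod.fst
    · obtain ⟨P, e', Q, rfl, haP⟩ := exists_eq_append_cons_of_mem_map_fst ha
      have hdisj : (P.map Prod.fst).Disjoint (((a, e + e') :: Q).map Prod.fst) := by
        intro x hxP hxQ
        have hax : a ≠ x := fun h => haP (h ▸ hxP)
        have hxQ : x ∈ Q.map Prod.fst := by simpa [hax.symm] using hxQ
        refine hnc a x hax ?_
        simpa using (List.singleton_sublist.2 hxP).append
          ((List.singleton_sublist.2 hxQ).cons_cons a)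
      have hsumPQ : exponentSum P + exponentSum ((a, e + e') :: Q) = 0 := by
        rw [← hsum]
        simp only [exponentSum_cons, exponentSum_append, Finsupp.single_add]
        abel
      have hP : exponentSum P = 0 := exponentSum_eq_zero_of_add_eq_zero hdisj hsumPQ
      have hprodP : zpowProd f P = 1 :=
        zpowProd_eq_one_of_noncrossing f P
          (fun x y hxy h => hnc x y hxy (h.trans (List.Sublist.map _ (by simp)))) hP
      have hprodQ : zpowProd f ((a, e + e') :: Q) = 1 :=
        zpowProd_eq_one_of_noncrossing f ((a, e + e') :: Q)
          (fun x y hxy h => hnc x y hxy (h.trans (by simp))) (by simpa [hP] using hsumPQ)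
      simpa [hprodP, zpow_add, mul_assoc] using hprodQ
    · have he : e = 0 := by
        simpa [exponentSum_apply_of_notMem ha] using DFunLike.congr_fun hsum a
      subst he
      simpa using zpowProd_eq_one_of_noncrossing f L
        (fun x y hxy h => hnc x y hxy (h.trans (by simp))) (by simpa using hsum)
termination_by L.length

theorem exists_strictMono_of_sublist_ofFn {α : Type*} {k : ℕ} {i : Fin k → α} {l : List α}
    (h : l <+ List.ofFn i) : ∃ g : Fin l.length → Fin k, StrictMono g ∧ ∀ m, i (g m) = l.get m := by
  obtain ⟨g, hg⟩ := List.sublist_iff_exists_fin_orderEmbedding_get_eq.1 h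
  refine ⟨fun m => (g m).cast List.length_ofFn, fun _ _ hmn => g.strictMono hmn, fun m => ?_⟩
  rw [hg, List.get_ofFn]

theorem exists_crossing_of_sublist_ofFn {α : Type*} {k : ℕ} {i : Fin k → α} {x y : α}
    (hxy : x ≠ y) (h : [x, y, x, y] <+ List.ofFn i) :
    ∃ a c b d : Fin k, a < c ∧ c < b ∧ b < d ∧ i a = i b ∧ i c = i d ∧ i a ≠ i c := by
  obtain ⟨g, hg, hi⟩ : ∃ g : Fin 4 → Fin k, StrictMono g ∧ ∀ m, i (g m) = [x, y, x, y].get m :=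
    exists_strictMono_of_sublist_ofFn h
  exact ⟨g 0, g 1, g 2, g 3, hg (by decide), hg (by decide), hg (by decide),
    (hi 0).trans (hi 2).symm, (hi 1).trans (hi 3).symm, by simpa [hi] using hxy⟩

end Noncrossing

section PairFibers

variable {ι S : Type*} [Fintype ι] {i : ι → S} {ε : ι → ℤ}

theorem sum_single_apply_of_card_fiber_eq_two {j l : ι} (hjl : j ≠ l) (hi : i j = i l)
    (hj : Nat.card {q // i q = i j} = 2) :
    (∑ q, Finsupp.single (i q) (ε q)) (i j) = ε j + ε l := by
  classical
  have hfiber : ({q | i q = i j} : Finset ι) = {j, l} := by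
    refine (Finset.eq_of_subset_of_card_le (by simp [Finset.insert_subset_iff, hi]) ?_).symm
    rw [← Fintype.card_subtype, ← Nat.card_eq_fintype_card, hj, Finset.card_pair hjl]
  simp only [Finsupp.finsetSum_apply, Finsupp.single_apply]
  rw [← Finset.sum_filter, hfiber, Finset.sum_pair hjl]

theorem sum_single_eq_zero_iff_of_card_fiber_eq_two
    (hpair : ∀ j, Nat.card {l // i l = i j} = 2) :
    ∑ j, Finsupp.single (i j) (ε j) = 0 ↔ ∀ j l, j ≠ l → i j = i l → ε j = -ε l := by
  constructor
  · intro hsum j l hjl hi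
    rw [eq_neg_iff_add_eq_zero, ← sum_single_apply_of_card_fiber_eq_two hjl hi (hpair j), hsum,
      Finsupp.coe_zero, Pi.zero_apply]
  · intro hε
    ext s
    by_cases hs : ∃ j, i j = s
    · obtain ⟨j, rfl⟩ := hs
      obtain ⟨⟨l, hl⟩, hlj⟩ :=
        ((Nat.card_eq_two_iff' (⟨j, rfl⟩ : {l // i l = i j})).1 (hpair j)).exists
      have hjl : j ≠ l := fun h => hlj (Subtype.ext h.symm)
      rw [sum_single_apply_of_card_fiber_eq_two hjl hl.symm (hpair j), hε j l hjl hl.symm]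
      simp
    · rw [not_exists] at hs
      simp [Finsupp.finsetSum_apply, hs]

theorem count_ofFn [DecidableEq S] {k : ℕ} (i : Fin k → S) (x : S) :
    (List.ofFn i).count x = Nat.card {l // i l = x} := by
  rw [← Multiset.coe_count, ← Fin.univ_val_map, Multiset.count_map, Nat.card_eq_fintype_card,
    Fintype.card_subtype, Finset.card_def, Finset.filter_val]
  simp only [eq_comm]

end PairFibers

section CorootPairing

variable {S K : Type*} [CommRing K]

/-- The pairing `⟨α_y^∨, s_{x₁} ⋯ s_{xₙ} α_t⟩` of a simple coroot with the image of a simple root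
under a word `[x₁, …, xₙ]` in the simple reflections, for the Cartan matrix
`a s t = ⟨α_s^∨, α_t⟩`. It is defined by recursion on the word so that it makes sense for
arbitrary coefficients `a`. -/
def corootPairing (a : S → S → K) (t : S) : List S → S → K
  | [], y => a y t
  | x :: L, y => corootPairing a t L y - corootPairing a t L x * a y x

variable {a : S → S → K} {t : S}

@[simp]
theorem corootPairing_nil (y : S) : corootPairing a t [] y = a y t := rfl

@[simp]
theorem corootPairing_cons (x : S) (L : List S) (y : S) :
    corootPairing a t (x :: L) y = corootPairing a t L y - corootPairing a t L x * a y x := rfl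

theorem corootPairing_cons_cons_self (h2 : ∀ s, a s s = 2) (z y : S) (L : List S) :
    corootPairing a t (z :: y :: L) y =
      corootPairing a t L y * (a y z * a z y - 1) - corootPairing a t L z * a y z := by
  simp only [corootPairing_cons, h2]
  ring

theorem corootPairing_cons_cons_cons_self (h2 : ∀ s, a s s = 2) (z y : S) (L : List S) :
    corootPairing a t (z :: y :: z :: L) y =
      corootPairing a t (z :: L) y * (a y z * a z y - 2) + corootPairing a t L y := by
  simp only [corootPairing_cons, h2]
  ring

theorem corootPairing_append_cons_cons (h2 : ∀ s, a s s = 2) (P : List S) (x : S) (Q : List S) :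
    corootPairing a t (P ++ x :: x :: Q) = corootPairing a t (P ++ Q) := by
  induction P with
  | nil => funext y; simp [h2]; ring
  | cons z P ih => funext y; simp [ih]

theorem exists_eq_append_cons_cons_of_not_isChain_ne {L : List S} (hL : ¬ L.IsChain (· ≠ ·)) :
    ∃ P x Q, L = P ++ x :: x :: Q := by
  rw [List.isChain_iff_forall_rel_of_append_cons_cons] at hL
  push Not at hL
  obtain ⟨x, _, P, Q, rfl, rfl⟩ := hL
  exact ⟨P, x, Q, rfl⟩

theorem exists_isChain_sublist_corootPairing_eq (h2 : ∀ s, a s s = 2) (t : S) (L : List S) :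
    ∃ L', L'.Sublist L ∧ L'.IsChain (· ≠ ·) ∧ corootPairing a t L' = corootPairing a t L := by
  by_cases hL : L.IsChain (· ≠ ·)
  · exact ⟨L, .refl L, hL, rfl⟩
  · obtain ⟨P, x, Q, rfl⟩ := exists_eq_append_cons_cons_of_not_isChain_ne hL
    obtain ⟨L', hsub, hchain, hL'⟩ := exists_isChain_sublist_corootPairing_eq h2 t (P ++ Q)
    exact ⟨L', hsub.trans (List.Sublist.append_left (by simp) P), hchain,
      hL'.trans (corootPairing_append_cons_cons h2 P x Q).symm⟩
termination_by L.length

section Order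

variable [LinearOrder K] [IsStrictOrderedRing K] [DecidableEq S]

/- Prepending `z` to the word adds a negative quantity to the pairing with `α_y^∨`, unless `z = y`.
The positive contribution of an earlier `y` is outweighed by that of the letter `z` following it,
because `2 ≤ a y z * a z y`. -/
theorem corootPairing_neg (h2 : ∀ s, a s s = 2) (hneg : ∀ s t, s ≠ t → a s t < 0)
    (hmul : ∀ s t, s ≠ t → 2 ≤ a s t * a t s) {L : List S} (hL : L.IsChain (· ≠ ·)) (ht : t ∉ L)
    (hcount : ∀ x, L.count x ≤ 2) {y : S} (hyt : y ≠ t) (hy : L.count y ≤ 1)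
    (hhead : L.head? ≠ some y) : corootPairing a t L y < 0 := by
  have ih {w : S} {P L' : List S} (hsplit : L = w :: P ++ L') {x : S} (hxt : x ≠ t)
      (hx : L'.count x ≤ 1) (hxhead : L'.head? ≠ some x) : corootPairing a t L' x < 0 := by
    have hsub : L' <:+ L := ⟨_, hsplit.symm⟩
    have : L'.length < L.length := by grind
    exact corootPairing_neg h2 hneg hmul (hL.suffix hsub) (fun h => ht (hsub.mem h))
      (fun z => (hsub.sublist.count_le z).trans (hcount z)) hxt hx hxhead
  match L with
  | [] => exact hneg y t hyt
  | z :: L =>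
    have hzy : z ≠ y := by simpa using hhead
    have hzt : z ≠ t := by grind
    have hzL : L.head? ≠ some z := fun h => (List.isChain_cons.1 hL).1 z h rfl
    have hz₁ : L.count z ≤ 1 := by simpa using hcount z
    have hz : corootPairing a t L z < 0 := ih (P := []) rfl hzt hz₁ hzL
    by_cases hyL : L.head? = some y
    · obtain ⟨L, rfl⟩ := List.head?_eq_some_iff.1 hyL
      have hy₀ : y ∉ L := by simpa [List.count_cons_of_ne hzy, List.count_eq_zero] using hy
      have hyz := hmul y z hzy.symm
      have hy : corootPairing a t L y < 0 :=
        ih (P := [y]) rfl hyt (by grind) fun h => hy₀ (List.mem_of_head? h)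
      by_cases hzL : L.head? = some z
      · obtain ⟨L, rfl⟩ := List.head?_eq_some_iff.1 hzL
        have hy' : corootPairing a t L y < 0 :=
          ih (P := [y, z]) rfl hyt (by grind)
            fun h => hy₀ (List.mem_cons_of_mem z (List.mem_of_head? h))
        rw [corootPairing_cons_cons_cons_self h2]
        nlinarith
      · have hz : corootPairing a t L z < 0 :=
          ih (P := [y]) rfl hzt (List.count_le_count_cons.trans hz₁) hzL
        have := mul_pos_of_neg_of_neg hz (hneg y z hzy.symm)
        rw [corootPairing_cons_cons_self h2]
        nlinarith
    · have hy : corootPairing a t L y < 0 := ih (P := []) rfl hyt (by grind) hyL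
      have := mul_pos_of_neg_of_neg hz (hneg y z hzy.symm)
      rw [corootPairing_cons]
      linarith
termination_by L.length

theorem corootPairing_self_nonpos (h2 : ∀ s, a s s = 2) (hneg : ∀ s t, s ≠ t → a s t < 0)
    (hmul : ∀ s t, s ≠ t → 2 ≤ a s t * a t s) {L : List S} (hL : L.IsChain (· ≠ ·)) (ht : t ∉ L)
    (hcount : ∀ x, L.count x ≤ 2) (hne : L ≠ []) : corootPairing a t L t ≤ 0 := by
  induction L with
  | nil => contradiction
  | cons x L ih =>
    obtain ⟨hxL, hL⟩ := List.isChain_cons.1 hL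
    obtain ⟨htx, htL⟩ : t ≠ x ∧ t ∉ L := by simpa using ht
    have hcountL w : L.count w ≤ 2 := List.count_le_count_cons.trans (hcount w)
    rcases eq_or_ne L [] with rfl | hLne
    · have := hmul t x htx
      simp only [corootPairing_cons, corootPairing_nil, h2]
      linarith
    · have hself : corootPairing a t L t ≤ 0 := ih hL htL hcountL hLne
      have hx : corootPairing a t L x < 0 :=
        corootPairing_neg h2 hneg hmul hL htL hcountL htx.symm (by simpa using hcount x)
          fun h => hxL x h rfl
      have := mul_pos_of_neg_of_neg hx (hneg t x htx)
      rw [corootPairing_cons]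
      linarith

theorem corootPairing_self_eq_two_or_nonpos (h2 : ∀ s, a s s = 2)
    (hneg : ∀ s t, s ≠ t → a s t < 0) (hmul : ∀ s t, s ≠ t → 2 ≤ a s t * a t s) {L : List S}
    (ht : t ∉ L) (hcount : ∀ x, L.count x ≤ 2) :
    corootPairing a t L t = 2 ∨ corootPairing a t L t ≤ 0 := by
  obtain ⟨L', hsub, hchain, hL'⟩ := exists_isChain_sublist_corootPairing_eq h2 t L
  rw [← hL']
  rcases eq_or_ne L' [] with rfl | hne
  · exact .inl (h2 t)
  · exact .inr (corootPairing_self_nonpos h2 hneg hmul hchain (fun h => ht (hsub.mem h))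
      (fun x => (hsub.count_le x).trans (hcount x)) hne)

end Order

end CorootPairing

section ReflectionOrder

open Polynomial Real

theorem eval_chebyshevS_add_eq_zero {θ : ℝ} (hθ : sin θ ≠ 0) {m n : ℤ}
    (hmn : (m + n + 2) * θ = 2 * π) :
    (Chebyshev.S ℝ m).eval (2 * cos θ) + (Chebyshev.S ℝ n).eval (2 * cos θ) = 0 := by
  have hsin : sin ((m + 1) * θ) = -sin ((n + 1) * θ) := by
    rw [← sin_two_pi_sub, ← hmn]
    ring_nf
  refine (mul_eq_zero.1 ?_).resolve_right hθ
  rw [add_mul, Chebyshev.S_two_mul_real_cos, Chebyshev.S_two_mul_real_cos, hsin, neg_add_cancel]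

variable {V : Type*} [AddCommGroup V] [Module ℝ V] {x y : V} {f g : Module.Dual ℝ V}

theorem reflection_mul_reflection_sq_eq_one (hf : f x = 2) (hg : g y = 2) (hfy : f y = 0)
    (hgx : g x = 0) : (Module.reflection hf * Module.reflection hg) ^ 2 = 1 := by
  ext1 z
  refine (Module.reflection_mul_reflection_pow_apply hf hg 2 z).trans ?_
  simp [hfy, hgx]
  module

theorem reflection_mul_reflection_pow_eq_one (hf : f x = 2) (hg : g y = 2) {m : ℕ} (hm : 3 ≤ m)
    (hfg : f y * g x = 4 * cos (π / m) ^ 2) :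
    (Module.reflection hf * Module.reflection hg) ^ m = 1 := by
  have hm' : (3 : ℝ) ≤ m := by exact_mod_cast hm
  have hsin : sin (2 * π / m) ≠ 0 := by
    refine (sin_pos_of_pos_of_lt_pi (by positivity) ?_).ne'
    rw [div_lt_iff₀ (by linarith)]
    nlinarith [pi_pos]
  have hcos : 2 * cos (2 * π / m) = f y * g x - 2 := by
    rw [hfg, mul_div_assoc, cos_two_mul]
    ring
  have hS {a b : ℤ} (hab : a + b + 2 = m) : (Chebyshev.S ℝ a).eval (2 * cos (2 * π / m)) +
      (Chebyshev.S ℝ b).eval (2 * cos (2 * π / m)) = 0 := by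
    refine eval_chebyshevS_add_eq_zero hsin ?_
    rw [show (a + b + 2 : ℝ) = m by exact_mod_cast hab]
    field_simp
  ext1 z
  refine (Module.reflection_mul_reflection_pow_apply hf hg m z _ hcos).trans ?_
  obtain ⟨k, hk | hk⟩ := m.even_or_odd'
  · have hSk : (Chebyshev.S ℝ (k - 1)).eval (2 * cos (2 * π / m)) = 0 :=
      self_eq_neg.1 (eq_neg_of_add_eq_zero_left (hS (by omega)))
    rw [show ((m : ℤ) - 2) / 2 = k - 1 by omega, show ((m : ℤ) - 1) / 2 = k - 1 by omega, hSk]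
    simp
  · have hSk : (Chebyshev.S ℝ k).eval (2 * cos (2 * π / m)) +
        (Chebyshev.S ℝ (k - 1)).eval (2 * cos (2 * π / m)) = 0 := hS (by omega)
    rw [show ((m : ℤ) - 1) / 2 = k by omega, show ((m : ℤ) - 3) / 2 = k - 1 by omega,
      show (m : ℤ) / 2 = k by omega, show ((m : ℤ) - 2) / 2 = k - 1 by omega, hSk]
    simp

end ReflectionOrder

section GeometricRepresentation

open Real

variable {S : Type*} {M : CoxeterMatrix S}

/-- The Cartan matrix `⟨α_s^∨, α_t⟩ = -2 cos (π / M s t)` of the geometric representation. When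
`M s t = 0` encodes `∞`, the convention `π / 0 = 0` gives the intended value `-2`. -/
noncomputable def cartanCoeff (M : CoxeterMatrix S) (s t : S) : ℝ := -2 * cos (π / M s t)

@[simp]
theorem cartanCoeff_self (s : S) : cartanCoeff M s s = 2 := by simp [cartanCoeff]

theorem cartanCoeff_comm (s t : S) : cartanCoeff M s t = cartanCoeff M t s := by
  rw [cartanCoeff, cartanCoeff, M.symmetric]

/-- A Coxeter matrix is of extra-large type if each off-diagonal entry is infinite (encoded by
`0`) or at least `4`. -/
def IsExtraLarge (M : CoxeterMatrix S) : Prop := ∀ s t : S, s ≠ t → M s t = 0 ∨ 4 ≤ M s t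

theorem IsExtraLarge.cartanCoeff_le (hM : IsExtraLarge M) {s t : S} (hst : s ≠ t) :
    cartanCoeff M s t ≤ -√2 := by
  have hle : π / M s t ≤ π / 4 := by
    obtain h | h := hM s t hst
    · rw [h, Nat.cast_zero, div_zero]
      positivity
    · have : (4 : ℝ) ≤ M s t := by exact_mod_cast h
      gcongr
  have hcos : cos (π / 4) ≤ cos (π / M s t) :=
    cos_le_cos_of_nonneg_of_le_pi (by positivity) (by linarith [pi_pos]) hle
  rw [cos_pi_div_four] at hcos
  rw [cartanCoeff]
  linarith

theorem IsExtraLarge.cartanCoeff_neg (hM : IsExtraLarge M) {s t : S} (hst : s ≠ t) :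
    cartanCoeff M s t < 0 :=
  (hM.cartanCoeff_le hst).trans_lt (by simp)

theorem IsExtraLarge.two_le_cartanCoeff_mul (hM : IsExtraLarge M) {s t : S} (hst : s ≠ t) :
    2 ≤ cartanCoeff M s t * cartanCoeff M t s := by
  nlinarith [hM.cartanCoeff_le hst, hM.cartanCoeff_le hst.symm, sqrt_nonneg (2 : ℝ),
    sq_sqrt (zero_le_two (α := ℝ))]

/-- The simple coroot `α_s^∨` as a functional on the space with basis the simple roots `α_t`,
`t ∈ S`, where `α_t` is `Finsupp.single t 1`. -/
noncomputable def simpleCoroot (M : CoxeterMatrix S) (s : S) : Module.Dual ℝ (S →₀ ℝ) :=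
  Finsupp.linearCombination ℝ (cartanCoeff M s)

@[simp]
theorem simpleCoroot_single (s t : S) :
    simpleCoroot M s (Finsupp.single t 1) = cartanCoeff M s t := by
  simp [simpleCoroot]

theorem simpleCoroot_single_self (s : S) : simpleCoroot M s (Finsupp.single s 1) = 2 := by
  rw [simpleCoroot_single, cartanCoeff_self]

/-- The simple reflection `v ↦ v - ⟨α_s^∨, v⟩ α_s` of the geometric representation. -/
noncomputable def simpleReflection (M : CoxeterMatrix S) (s : S) : (S →₀ ℝ) ≃ₗ[ℝ] (S →₀ ℝ) :=
  Module.reflection (simpleCoroot_single_self (M := M) s)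

theorem simpleReflection_apply (s : S) (v : S →₀ ℝ) :
    simpleReflection M s v = v - simpleCoroot M s v • Finsupp.single s 1 :=
  Module.reflection_apply _ _

theorem isLiftable_simpleReflection (M : CoxeterMatrix S) : M.IsLiftable (simpleReflection M) := by
  intro s t
  have hs := simpleCoroot_single_self (M := M) s
  have ht := simpleCoroot_single_self (M := M) t
  rcases eq_or_ne s t with rfl | hst
  · ext1 v
    rw [M.diagonal, pow_one, LinearEquiv.mul_apply]
    exact Module.involutive_reflection hs v
  have h1 : M s t ≠ 1 := M.off_diagonal s t hst
  rcases (by omega : M s t = 0 ∨ M s t = 2 ∨ 3 ≤ M s t) with h0 | h2 | h3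
  · rw [h0, pow_zero]
  · have hzero : cartanCoeff M s t = 0 := by simp [cartanCoeff, h2]
    rw [h2]
    exact reflection_mul_reflection_sq_eq_one hs ht (by rw [simpleCoroot_single, hzero])
      (by rw [simpleCoroot_single, cartanCoeff_comm, hzero])
  · refine reflection_mul_reflection_pow_eq_one hs ht h3 ?_
    rw [simpleCoroot_single, simpleCoroot_single, cartanCoeff_comm t s, cartanCoeff]
    ring

variable {W : Type*} [Group W] (cs : CoxeterSystem M W)

/-- The geometric representation of a Coxeter group. -/
noncomputable def geometricRep : W →* ((S →₀ ℝ) ≃ₗ[ℝ] (S →₀ ℝ)) :=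
  cs.lift ⟨simpleReflection M, isLiftable_simpleReflection M⟩

@[simp]
theorem geometricRep_simple (s : S) : geometricRep cs (cs.simple s) = simpleReflection M s :=
  cs.lift_apply_simple _ s

theorem geometricRep_wordProd_cons_apply (s : S) (ω : List S) (v : S →₀ ℝ) :
    geometricRep cs (cs.wordProd (s :: ω)) v = geometricRep cs (cs.wordProd ω) v -
      simpleCoroot M s (geometricRep cs (cs.wordProd ω) v) • Finsupp.single s 1 := by
  rw [cs.wordProd_cons, map_mul, geometricRep_simple, LinearEquiv.mul_apply, simpleReflection_apply]

theorem simpleCoroot_geometricRep_wordProd (t : S) (ω : List S) (y : S) :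
    simpleCoroot M y (geometricRep cs (cs.wordProd ω) (Finsupp.single t 1)) =
      corootPairing (cartanCoeff M) t ω y := by
  induction ω generalizing y with
  | nil => simp
  | cons x ω ih =>
    rw [geometricRep_wordProd_cons_apply, map_sub, map_smul, simpleCoroot_single, ih, ih,
      corootPairing_cons, smul_eq_mul]

theorem geometricRep_wordProd_apply_of_notMem {t : S} {ω : List S} (ht : t ∉ ω) (v : S →₀ ℝ) :
    geometricRep cs (cs.wordProd ω) v t = v t := by
  induction ω with
  | nil => simp
  | cons x ω ih =>
    obtain ⟨htx, htω⟩ : t ≠ x ∧ t ∉ ω := by simpa using ht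
    simp [geometricRep_wordProd_cons_apply, ih htω, htx]

theorem geometricRep_wordProd_single_apply_ne_zero [DecidableEq S] (hM : IsExtraLarge M) {t : S}
    {ω : List S} (ht : ω.count t ≤ 1) (hω : ∀ x, ω.count x ≤ 2) :
    geometricRep cs (cs.wordProd ω) (Finsupp.single t 1) t ≠ 0 := by
  by_cases h : t ∈ ω
  · obtain ⟨P, Q, rfl⟩ := List.append_of_mem h
    obtain ⟨htP, htQ⟩ : t ∉ P ∧ t ∉ Q := by grind
    have hpairing : corootPairing (cartanCoeff M) t Q t = 2 ∨
        corootPairing (cartanCoeff M) t Q t ≤ 0 :=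
      corootPairing_self_eq_two_or_nonpos cartanCoeff_self (fun _ _ => hM.cartanCoeff_neg)
        (fun _ _ => hM.two_le_cartanCoeff_mul) htQ
        fun x => (List.Sublist.count_le x (by simp)).trans (hω x)
    have hcoeff : geometricRep cs (cs.wordProd (P ++ t :: Q)) (Finsupp.single t 1) t =
        1 - corootPairing (cartanCoeff M) t Q t := by
      rw [cs.wordProd_append, map_mul, LinearEquiv.mul_apply,
        geometricRep_wordProd_apply_of_notMem cs htP, geometricRep_wordProd_cons_apply,
        simpleCoroot_geometricRep_wordProd]
      simp [geometricRep_wordProd_apply_of_notMem cs htQ]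
    rw [hcoeff]
    rcases hpairing with h | h <;> linarith
  · simp [geometricRep_wordProd_apply_of_notMem cs h]

/- The coefficient of `α_j` in `ρ(π ω) α_j` is nonzero, while `s_i` alters only the coefficient of
`α_i`, so `ρ(s_i)` cannot negate `ρ(π ω) α_j` unless `i = j`. -/
theorem eq_of_simple_mul_wordProd_eq_wordProd_mul_simple [DecidableEq S] (hM : IsExtraLarge M)
    {i j : S} {ω : List S} (hj : ω.count j ≤ 1) (hω : ∀ x, ω.count x ≤ 2)
    (h : cs.simple i * cs.wordProd ω = cs.wordProd ω * cs.simple j) : i = j := by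
  by_contra hij
  have hneg : geometricRep cs (cs.wordProd (i :: ω)) (Finsupp.single j 1) =
      -geometricRep cs (cs.wordProd ω) (Finsupp.single j 1) := by
    rw [cs.wordProd_cons, h, map_mul, geometricRep_simple, LinearEquiv.mul_apply, simpleReflection,
      Module.reflection_apply_self, map_neg]
  have hcoeff := DFunLike.congr_fun hneg j
  rw [geometricRep_wordProd_cons_apply] at hcoeff
  refine geometricRep_wordProd_single_apply_ne_zero cs hM hj hω ?_
  simpa [Ne.symm hij, self_eq_neg] using hcoeff

end GeometricRepresentation

/-- The reflections met by a word in letters with integer exponents, each with the exponent of its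
letter: a letter `s` followed by a suffix of value `w` contributes `w⁻¹ s w`. For exponents `1`
these are the entries of the right inversion sequence. -/
def reflectionSeq {S W : Type*} {M : CoxeterMatrix S} [Group W] (cs : CoxeterSystem M W) :
    List (S × ℤ) → List (W × ℤ)
  | [] => []
  | p :: L =>
    ((zpowProd cs.simple L)⁻¹ * cs.simple p.1 * zpowProd cs.simple L, p.2) :: reflectionSeq cs L

section ReflectionSeq

variable {S W : Type*} {M : CoxeterMatrix S} [Group W] (cs : CoxeterSystem M W)

@[simp]
theorem reflectionSeq_nil : reflectionSeq cs [] = [] := rfl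

@[simp]
theorem reflectionSeq_cons (p : S × ℤ) (L : List (S × ℤ)) :
    reflectionSeq cs (p :: L) =
      ((zpowProd cs.simple L)⁻¹ * cs.simple p.1 * zpowProd cs.simple L, p.2) ::
        reflectionSeq cs L := rfl

theorem reflectionSeq_map_prodMk_one (ω : List S) :
    reflectionSeq cs (ω.map (·, 1)) = (cs.rightInvSeq ω).map (·, 1) := by
  induction ω with
  | nil => rfl
  | cons s ω ih =>
    rw [List.map_cons, reflectionSeq_cons, ih, zpowProd_map_prodMk_one]
    rfl

theorem exists_sublist_zpowProd_simple_eq_wordProd (L : List (S × ℤ)) :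
    ∃ ω, ω.Sublist (L.map Prod.fst) ∧ zpowProd cs.simple L = cs.wordProd ω := by
  induction L with
  | nil => exact ⟨[], .slnil, rfl⟩
  | cons p L ih =>
    obtain ⟨ω, hω, hL⟩ := ih
    have hsq : cs.simple p.1 ^ (2 : ℤ) = 1 := by simp
    rcases p.2.even_or_odd' with ⟨n, hn | hn⟩
    · refine ⟨ω, hω.cons _, ?_⟩
      rw [zpowProd_cons, hn, zpow_mul, hsq, one_zpow, one_mul, hL]
    · refine ⟨p.1 :: ω, hω.cons_cons _, ?_⟩
      rw [zpowProd_cons, hn, zpow_add, zpow_mul, hsq, one_zpow, one_mul, zpow_one, hL,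
        cs.wordProd_cons]

theorem conj_zpowProd_append_cons_eq_iff (i : S) (P : List (S × ℤ)) (p : S × ℤ)
    (Q : List (S × ℤ)) :
    (zpowProd cs.simple (P ++ p :: Q))⁻¹ * cs.simple i * zpowProd cs.simple (P ++ p :: Q) =
        (zpowProd cs.simple Q)⁻¹ * cs.simple p.1 * zpowProd cs.simple Q ↔
      cs.simple i * zpowProd cs.simple P = zpowProd cs.simple P * cs.simple p.1 := by
  rw [zpowProd_append, zpowProd_cons]
  generalize zpowProd cs.simple P = u, zpowProd cs.simple Q = v, cs.simple p.1 = t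
  calc _ ↔ (t ^ p.2 * v)⁻¹ * (u⁻¹ * cs.simple i * u) * (t ^ p.2 * v) =
        (t ^ p.2 * v)⁻¹ * t * (t ^ p.2 * v) := by
        rw [show (t ^ p.2 * v)⁻¹ * t * (t ^ p.2 * v) = v⁻¹ * t * v by group]
        simp only [mul_inv_rev, mul_assoc]
    _ ↔ cs.simple i * u = u * t := by
        rw [mul_left_inj, mul_right_inj, mul_assoc, inv_mul_eq_iff_eq_mul]

theorem exists_eq_append_cons_of_map_reflectionSeq_eq {L : List (S × ℤ)} {g : W → S}
    (hg : (reflectionSeq cs L).map (Prod.map g id) = L) {r : W}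
    (hr : r ∈ (reflectionSeq cs L).map Prod.fst) :
    ∃ P e Q, L = P ++ (g r, e) :: Q ∧
      r = (zpowProd cs.simple Q)⁻¹ * cs.simple (g r) * zpowProd cs.simple Q := by
  induction L with
  | nil => simp at hr
  | cons p L ih =>
    rw [reflectionSeq_cons, List.map_cons, List.cons.injEq] at hg
    have hp : g ((zpowProd cs.simple L)⁻¹ * cs.simple p.1 * zpowProd cs.simple L) = p.1 :=
      congrArg Prod.fst hg.1
    rcases List.mem_cons.1 hr with rfl | hr
    · exact ⟨[], p.2, L, by rw [hp, List.nil_append], by rw [hp]⟩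
    · obtain ⟨P, e, Q, hL, hrQ⟩ := ih hg.2 hr
      exact ⟨p :: P, e, Q, congrArg (p :: ·) hL, hrQ⟩

theorem apply_eq_of_map_reflectionSeq_eq [DecidableEq S] (hM : IsExtraLarge M) {L : List (S × ℤ)}
    (hL : ∀ x, (L.map Prod.fst).count x ≤ 2) {g : W → S}
    (hg : (reflectionSeq cs L).map (Prod.map g id) = L) {r : W}
    (hr : r ∈ (reflectionSeq cs L).map Prod.fst) {i : S}
    (hri : r = (zpowProd cs.simple L)⁻¹ * cs.simple i * zpowProd cs.simple L) : g r = i := by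
  obtain ⟨P, e, Q, hLPQ, hrQ⟩ := exists_eq_append_cons_of_map_reflectionSeq_eq cs hg hr
  obtain ⟨ω, hω, hPω⟩ := exists_sublist_zpowProd_simple_eq_wordProd cs P
  have hcomm : cs.simple i * cs.wordProd ω = cs.wordProd ω * cs.simple (g r) := by
    rw [← hPω, ← conj_zpowProd_append_cons_eq_iff cs i P (g r, e) Q, ← hLPQ, ← hri, ← hrQ]
  have hcount x : ω.count x + ((g r, e) :: Q |>.map Prod.fst).count x ≤ 2 := by
    refine le_trans (Nat.add_le_add_right (hω.count_le x) _) ?_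
    rw [← List.count_append, ← List.map_append, ← hLPQ]
    exact hL x
  refine (eq_of_simple_mul_wordProd_eq_wordProd_mul_simple cs hM ?_
    (fun x => (Nat.le_add_right _ _).trans (hcount x)) hcomm).symm
  grind [hcount (g r)]

theorem exists_map_reflectionSeq_eq [DecidableEq S] [Nonempty S] (hM : IsExtraLarge M)
    {L : List (S × ℤ)} (hL : ∀ x, (L.map Prod.fst).count x ≤ 2) :
    ∃ g : W → S, (reflectionSeq cs L).map (Prod.map g id) = L := by
  classical
  induction L with
  | nil => exact ⟨fun _ => Classical.arbitrary S, rfl⟩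
  | cons p L ih =>
    replace hL x : (L.map Prod.fst).count x ≤ 2 := List.count_le_count_cons.trans (hL x)
    obtain ⟨g, hg⟩ := ih hL
    refine ⟨Function.update g
      ((zpowProd cs.simple L)⁻¹ * cs.simple p.1 * zpowProd cs.simple L) p.1, ?_⟩
    rw [reflectionSeq_cons, List.map_cons, Prod.map_apply, Function.update_self]
    refine congrArg (p :: ·) (Eq.trans (List.map_congr_left fun q hq => ?_) hg)
    refine Prod.ext ?_ rfl
    rw [Prod.map_fst, Prod.map_fst, Function.update_apply, ite_eq_right_iff]
    exact fun h => (apply_eq_of_map_reflectionSeq_eq cs hM hL hg (List.mem_map_of_mem hq) h).symm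

end ReflectionSeq

section ReflectionPerm

variable {S W : Type*} {M : CoxeterMatrix S} [Group W] (cs : CoxeterSystem M W)

theorem single_apply_conj {G A : Type*} [Group G] [Zero A] (g x t : G) (a : A) :
    Finsupp.single x a (MulAut.conj g t) = Finsupp.single (g⁻¹ * x * g) a t := by
  classical
  simp only [Finsupp.single_apply, MulAut.conj_apply]
  congr 1
  rw [eq_mul_inv_iff_mul_eq, mul_assoc, inv_mul_eq_iff_eq_mul]

/-- The permutation `(t, n) ↦ (s t s⁻¹, n + [t = s])` of `W × ℤ` attached to a generator `s`. These
permutations satisfy the braid relations, and the second coordinate records how often, with sign,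
the reflection `t` is met. -/
noncomputable def reflectionPerm (s : S) : Equiv.Perm (W × ℤ) :=
  (MulAut.conj (cs.simple s)).toEquiv.prodShear fun t =>
    Equiv.addRight (Finsupp.single (cs.simple s) 1 t)

theorem reflectionPerm_apply (s : S) (t : W) (n : ℤ) :
    reflectionPerm cs s (t, n) =
      (MulAut.conj (cs.simple s) t, n + Finsupp.single (cs.simple s) 1 t) := rfl

theorem reflectionPerm_zpow_apply (s : S) (e : ℤ) (t : W) (n : ℤ) :
    (reflectionPerm cs s ^ e) (t, n) =
      (MulAut.conj (cs.simple s ^ e) t, n + Finsupp.single (cs.simple s) e t) := by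
  have hstep (e : ℤ) : reflectionPerm cs s
      (MulAut.conj (cs.simple s ^ e) t, n + Finsupp.single (cs.simple s) e t) =
      (MulAut.conj (cs.simple s ^ (e + 1)) t, n + Finsupp.single (cs.simple s) (e + 1) t) := by
    rw [reflectionPerm_apply, single_apply_conj, mul_assoc, (Commute.self_zpow _ e).eq,
      inv_mul_cancel_left, zpow_add_one, (Commute.zpow_self _ e).eq, map_mul, MulAut.mul_apply,
      Finsupp.single_add, Finsupp.add_apply, add_assoc]
  induction e with
  | zero => simp
  | succ e ih => rw [add_comm, zpow_one_add, Equiv.Perm.mul_apply, ih, hstep, add_comm]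
  | pred e ih =>
    refine (reflectionPerm cs s).injective ?_
    rw [hstep, sub_add_cancel, ← ih, ← Equiv.Perm.mul_apply, ← zpow_one_add, add_sub_cancel]

theorem zpowProd_reflectionPerm_apply (L : List (S × ℤ)) (t : W) (n : ℤ) :
    zpowProd (reflectionPerm cs) L (t, n) =
      (MulAut.conj (zpowProd cs.simple L) t, n + exponentSum (reflectionSeq cs L) t) := by
  induction L with
  | nil => simp
  | cons p L ih =>
    rw [zpowProd_cons, Equiv.Perm.mul_apply, ih, reflectionPerm_zpow_apply, single_apply_conj,
      zpowProd_cons, map_mul, MulAut.mul_apply, reflectionSeq_cons, exponentSum_cons,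
      Finsupp.add_apply]
    congr 1
    ring

theorem rightInvSeq_alternatingWord (s t : S) (m : ℕ) :
    cs.rightInvSeq (CoxeterSystem.alternatingWord s t m) =
      ((List.range m).map fun k => (cs.simple t * cs.simple s) ^ k * cs.simple t).reverse := by
  induction m generalizing s t with
  | zero => rfl
  | succ m ih =>
    rw [CoxeterSystem.alternatingWord_succ, cs.rightInvSeq_concat, ih, List.range_succ_eq_map]
    have hconj (k : ℕ) : cs.simple t * ((cs.simple s * cs.simple t) ^ k * cs.simple s) *
        cs.simple t = (cs.simple t * cs.simple s) ^ (k + 1) * cs.simple t := by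
      rw [← mul_assoc (cs.simple t), ← mul_pow_mul, pow_succ]
      simp only [mul_assoc]
    simp [Function.comp_def, hconj]

theorem rightInvSeq_braidWord_swap (s t : S) :
    cs.rightInvSeq (CoxeterSystem.braidWord M t s) =
      (cs.rightInvSeq (CoxeterSystem.braidWord M s t)).reverse := by
  rw [CoxeterSystem.braidWord, CoxeterSystem.braidWord, M.symmetric t s,
    rightInvSeq_alternatingWord, rightInvSeq_alternatingWord, List.reverse_reverse]
  have hpow : (cs.simple s * cs.simple t) ^ M s t = 1 := cs.simple_mul_simple_pow s t
  have hinv : cs.simple t * cs.simple s = (cs.simple s * cs.simple t)⁻¹ := by simp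
  refine List.ext_getElem (by simp) fun k hk _ => ?_
  have hk : k + 1 + (M s t - 1 - k) = M s t := by grind
  simp only [List.getElem_reverse, List.getElem_map, List.getElem_range, List.length_map,
    List.length_range]
  rw [← mul_right_inj ((cs.simple s * cs.simple t) ^ (k + 1)), ← mul_assoc, ← pow_add, hk, hpow,
    hinv, inv_pow, pow_succ']
  simp [mul_assoc]

theorem prod_map_reflectionPerm_braidWord (s t : S) :
    ((CoxeterSystem.braidWord M s t).map (reflectionPerm cs)).prod =
      ((CoxeterSystem.braidWord M t s).map (reflectionPerm cs)).prod := by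
  have hsum : exponentSum (reflectionSeq cs ((CoxeterSystem.braidWord M t s).map (·, 1))) =
      exponentSum (reflectionSeq cs ((CoxeterSystem.braidWord M s t).map (·, 1))) := by
    rw [reflectionSeq_map_prodMk_one, reflectionSeq_map_prodMk_one, exponentSum_map_prodMk_one,
      exponentSum_map_prodMk_one, rightInvSeq_braidWord_swap cs s t, List.map_reverse,
      List.sum_reverse]
  ext1 ⟨r, n⟩
  rw [← zpowProd_map_prodMk_one, ← zpowProd_map_prodMk_one, zpowProd_reflectionPerm_apply,
    zpowProd_reflectionPerm_apply, hsum, zpowProd_map_prodMk_one, zpowProd_map_prodMk_one]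
  congr 3
  exact cs.wordProd_braidWord_eq s t

end ReflectionPerm

section ArtinGroup

variable {S W : Type*} {M : CoxeterMatrix S} [Group W]

theorem artinAltWord_eq_prod_alternatingWord (s t : S) (m : ℕ) :
    artinAltWord s t m = (((if Even m then CoxeterSystem.alternatingWord s t m
      else CoxeterSystem.alternatingWord t s m)).map FreeGroup.of).prod := by
  induction m with
  | zero => rfl
  | succ m ih =>
    have hsucc : artinAltWord s t (m + 1) =
        artinAltWord s t m * FreeGroup.of (if m % 2 = 0 then s else t) := by
      rw [artinAltWord, List.ofFn_succ_last, List.prod_append, List.prod_singleton]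
      rfl
    rw [hsucc, ih]
    by_cases hm : Even m
    · simp [hm, Nat.even_iff.1 hm, Nat.even_add_one, CoxeterSystem.alternatingWord_succ]
    · simp [hm, Nat.not_even_iff.1 hm, Nat.even_add_one, CoxeterSystem.alternatingWord_succ]

theorem lift_artinAltWord {G : Type*} [Group G] (f : S → G) (s t : S) (m : ℕ) :
    FreeGroup.lift f (artinAltWord s t m) = ((if Even m then CoxeterSystem.alternatingWord s t m
      else CoxeterSystem.alternatingWord t s m).map f).prod := by
  rw [artinAltWord_eq_prod_alternatingWord, map_list_prod, List.map_map]
  congr 2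
  ext x
  simp

/-- The action of the Artin group on `W × ℤ` in which each generator acts by `reflectionPerm`. -/
noncomputable def artinReflectionAction (cs : CoxeterSystem M W) :
    ArtinGroup M →* Equiv.Perm (W × ℤ) :=
  PresentedGroup.toGroup (f := reflectionPerm cs) <| by
    rintro _ ⟨s, t, -, -, rfl⟩
    have hbraid := prod_map_reflectionPerm_braidWord cs s t
    rw [CoxeterSystem.braidWord, CoxeterSystem.braidWord, M.symmetric t s] at hbraid
    rw [map_mul, map_inv, mul_inv_eq_one, lift_artinAltWord, lift_artinAltWord]
    split_ifs
    · exact hbraid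
    · exact hbraid.symm

theorem artinReflectionAction_artinGen (cs : CoxeterSystem M W) (s : S) :
    artinReflectionAction cs (artinGen M s) = reflectionPerm cs s :=
  PresentedGroup.toGroup.of _

theorem exponentSum_reflectionSeq_eq_zero_of_zpowProd_artinGen_eq_one (cs : CoxeterSystem M W)
    {L : List (S × ℤ)} (h : zpowProd (artinGen M) L = 1) :
    exponentSum (reflectionSeq cs L) = 0 := by
  ext t
  have hact := DFunLike.congr_fun (congrArg (artinReflectionAction cs) h) (t, 0)
  have hgen : artinReflectionAction cs ∘ artinGen M = reflectionPerm cs :=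
    funext (artinReflectionAction_artinGen cs)
  rw [map_zpowProd, hgen, zpowProd_reflectionPerm_apply, map_one, zero_add] at hact
  exact congrArg Prod.snd hact

theorem IsExtraLarge.exponentSum_eq_zero_of_zpowProd_artinGen_eq_one [DecidableEq S]
    (hM : IsExtraLarge M) {L : List (S × ℤ)} (hL : ∀ x, (L.map Prod.fst).count x ≤ 2)
    (h : zpowProd (artinGen M) L = 1) : exponentSum L = 0 := by
  rcases isEmpty_or_nonempty S with _ | _
  · exact Subsingleton.elim _ _
  · obtain ⟨g, hg⟩ := exists_map_reflectionSeq_eq M.toCoxeterSystem hM hL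
    rw [← hg, exponentSum_map,
      exponentSum_reflectionSeq_eq_zero_of_zpowProd_artinGen_eq_one M.toCoxeterSystem h,
      Finsupp.mapDomain_zero]

end ArtinGroup

theorem artin_word_eq_one_conditions_general {S : Type*} {M : CoxeterMatrix S}
    (hM : IsExtraLarge M) {k : ℕ} (i : Fin k → S) (ε : Fin k → ℤ)
    (hcard : ∀ j, Nat.card {l : Fin k // i l = i j} ≤ 2) :
    ((List.ofFn fun j => artinGen M (i j) ^ ε j).prod = 1 →
        ∑ j, Finsupp.single (i j) (ε j) = 0) ∧
    ((¬ ∃ a c b d : Fin k, a < c ∧ c < b ∧ b < d ∧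
          i a = i b ∧ i c = i d ∧ i a ≠ i c) →
        ∑ j, Finsupp.single (i j) (ε j) = 0 →
        (List.ofFn fun j => artinGen M (i j) ^ ε j).prod = 1) := by
  classical
  have hfst : (List.ofFn fun j => (i j, ε j)).map Prod.fst = List.ofFn i := by
    simp [List.map_ofFn, Function.comp_def]
  rw [← exponentSum_ofFn, ← zpowProd_ofFn]
  constructor
  · refine hM.exponentSum_eq_zero_of_zpowProd_artinGen_eq_one fun x => ?_
    rw [hfst]
    by_cases hx : x ∈ List.ofFn i
    · obtain ⟨j, rfl⟩ := (List.mem_ofFn' _ _).1 hx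
      exact (count_ofFn i (i j)).trans_le (hcard j)
    · simp [List.count_eq_zero_of_not_mem hx]
  · intro hnc
    refine zpowProd_eq_one_of_noncrossing _ _ fun x y hxy h => ?_
    exact hnc (exists_crossing_of_sublist_ofFn hxy (hfst ▸ h))

/-- Let `M` be a Coxeter matrix of extra-large type (`M s t = 0` or `M s t ≥ 4` for `s ≠ t`,
`0` encoding `∞`) on a countable type `S`, with Artin group `A` and generators `a`, and let
`(a_{i₁}^{ε₁}, …, a_{i_k}^{ε_k})` be a word whose associated partition is a pair partition.
(i) If some two positions `j ≠ l` carry the same letter `i j = i l` with equal signs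
`ε j = ε l`, then `a_{i₁}^{ε₁} ⋯ a_{i_k}^{ε_k} ≠ 1` in `A`.
(ii) Conversely, if the pair partition is non-crossing and the two occurrences of each letter
carry opposite signs, then `a_{i₁}^{ε₁} ⋯ a_{i_k}^{ε_k} = 1` in `A`. -/
theorem artin_word_eq_one_conditions {S : Type*} [Countable S]
    (M : CoxeterMatrix S) (hM : ∀ s t : S, s ≠ t → M s t = 0 ∨ 4 ≤ M s t)
    {k : ℕ} (i : Fin k → S) (ε : Fin k → ℤ) (hε : ∀ j, ε j = 1 ∨ ε j = -1)
    (hpair : ∀ j, Nat.card {l : Fin k // i l = i j} = 2) :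
    ((∃ j l : Fin k, j ≠ l ∧ i j = i l ∧ ε j = ε l) →
        (List.ofFn fun j => artinGen M (i j) ^ ε j).prod ≠ 1) ∧
    (((¬ ∃ a c b d : Fin k, a < c ∧ c < b ∧ b < d ∧
          i a = i b ∧ i c = i d ∧ i a ≠ i c) ∧
        (∀ j l : Fin k, j ≠ l → i j = i l → ε j = -ε l)) →
        (List.ofFn fun j => artinGen M (i j) ^ ε j).prod = 1) := by
  obtain ⟨h₁, h₂⟩ := artin_word_eq_one_conditions_general hM i ε fun j => (hpair j).le
  rw [sum_single_eq_zero_iff_of_card_fiber_eq_two hpair] at h₁ h₂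
  refine ⟨?_, fun h => h₂ h.1 h.2⟩
  rintro ⟨j, l, hjl, hi, he⟩ hw
  have hopp : ε j = -ε l := h₁ hw j l hjl hi
  rcases hε l <;> omega
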